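/- Let X be a Banach space with property (β) of Rolewicz, and let Y be a Banach space that is a uniform quotient of X (i.e., there is a surjective uniform quotient map f : X → Y). Then Y is reflexive. -/

import Mathlib

/-!
If `Y` is not reflexive, James's construction gives a bounded sequence `u` in `Y` such that, for
finite sets of indices `S < T`, the norm of `∑ i ∈ T, u i - ∑ i ∈ S, u i` is at least proportional
to `#T`. Rescale `u` so that `f` lifts each step `y ↦ y + u i` to a displacement of length at most
`r`; the sum of a block of `k` terms of `u` then lifts to a displacement of length at most `r * k`.
Lift a block of `k` terms, and from its endpoint lift infinitely many successive blocks of `k`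
terms. The resulting points of `X` have images far apart, so they are themselves far apart, as `f`
is Lipschitz at large distances; hence property (β) brings one of them closer to the starting point
than the triangle inequality does. Thus doubling the length of a block multiplies the cost per term
of lifting it by a factor `ρ < 1`. Iterating, the cost tends to zero, against the Lipschitz bound.
-/

open Finset Metric NormedSpace

section JamesSequences

variable {E : Type*} [NormedAddCommGroup E] [NormedSpace ℝ E]

theorem exists_norm_le_one_lt_apply_of_lt_norm {φ : StrongDual ℝ E} {θ : ℝ} (h : θ < ‖φ‖) :
    ∃ x, ‖x‖ ≤ 1 ∧ θ < φ x := by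
  obtain ⟨x, hx, hφx⟩ := φ.exists_lt_apply_of_lt_opNorm h
  rcases lt_abs.1 hφx with hpos | hneg
  · exact ⟨x, hx.le, hpos⟩
  · exact ⟨-x, by simpa only [norm_neg] using hx.le, by simpa only [map_neg] using hneg⟩

theorem exists_norm_le_one_forall_apply_eq_zero_lt_apply {ι : Type*} [Finite ι]
    (φ : ι → StrongDual ℝ E) {ξ : StrongDual ℝ E} {θ : ℝ}
    (h : ∀ η ∈ Submodule.span ℝ (Set.range φ), θ < ‖ξ - η‖) :
    ∃ x, ‖x‖ ≤ 1 ∧ (∀ i, φ i x = 0) ∧ θ < ξ x := by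
  cases nonempty_fintype ι
  let p : Submodule ℝ E := ⨅ i, (φ i).ker
  have mem_p {x : E} : x ∈ p ↔ ∀ i, φ i x = 0 := by simp [p, Submodule.mem_iInf]
  obtain ⟨ζ, hζ, hζ_norm⟩ := exists_extension_norm_eq p (ξ.comp p.subtypeL)
  have hspan : ξ - ζ ∈ Submodule.span ℝ (Set.range φ) := by
    have hker : p ≤ (ξ - ζ).ker := fun x hx ↦ by simpa [sub_eq_zero] using (hζ ⟨x, hx⟩).symm
    obtain ⟨c, hc⟩ := (Submodule.mem_span_range_iff_exists_fun ℝ).1 <|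
      mem_span_of_iInf_ker_le_ker (L := fun i ↦ (φ i).toLinearMap) hker
    refine (Submodule.mem_span_range_iff_exists_fun ℝ).2 ⟨c, ?_⟩
    ext x
    simpa using LinearMap.congr_fun hc x
  have hlt := h _ hspan
  rw [sub_sub_cancel, hζ_norm] at hlt
  obtain ⟨x, hx, hξx⟩ := exists_norm_le_one_lt_apply_of_lt_norm hlt
  exact ⟨x, hx, mem_p.1 x.2, hξx⟩

theorem apply_comp_pi {ι : Type*} [Finite ι] (ξ : StrongDual ℝ (StrongDual ℝ E))
    (φ : StrongDual ℝ (ι → ℝ)) (g : ι → StrongDual ℝ E) :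
    ξ (φ.comp (ContinuousLinearMap.pi g)) = φ fun i ↦ ξ (g i) := by
  classical
  cases nonempty_fintype ι
  have hφ (w : ι → ℝ) : φ w = ∑ i, φ (Pi.single i 1) * w i := by
    conv_lhs => rw [pi_eq_sum_univ' w]
    simp [mul_comm]
  have hcomp : φ.comp (ContinuousLinearMap.pi g) = ∑ i, φ (Pi.single i 1) • g i := by
    ext x
    simp [hφ (fun i ↦ g i x)]
  rw [hcomp, hφ]
  simp

/-- A finite-dimensional form of Goldstine's theorem. -/
theorem mem_closure_pi_image_closedBall {ι : Type*} [Finite ι] (g : ι → StrongDual ℝ E)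
    {ξ : StrongDual ℝ (StrongDual ℝ E)} (hξ : ‖ξ‖ ≤ 1) :
    (fun i ↦ ξ (g i)) ∈ closure (ContinuousLinearMap.pi g '' closedBall (0 : E) 1) := by
  cases nonempty_fintype ι
  by_contra hmem
  have hconv : Convex ℝ (closure (ContinuousLinearMap.pi g '' closedBall (0 : E) 1)) :=
    ((convex_closedBall 0 1).linear_image (ContinuousLinearMap.pi g).toLinearMap).closure
  obtain ⟨φ, b, hb_ball, hb⟩ := geometric_hahn_banach_closed_point hconv isClosed_closure hmem
  rw [← apply_comp_pi] at hb
  set ψ : StrongDual ℝ E := φ.comp (ContinuousLinearMap.pi g)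
  have hψ : ‖ψ‖ ≤ b := by
    by_contra! hlt
    obtain ⟨x, hx, hψx⟩ := exists_norm_le_one_lt_apply_of_lt_norm hlt
    have hxb : ψ x < b := hb_ball _ (subset_closure ⟨x, mem_closedBall_zero_iff.2 hx, rfl⟩)
    exact lt_asymm hψx hxb
  have hξψ : ξ ψ ≤ ‖ψ‖ :=
    (Real.le_norm_self _).trans <| by simpa using ξ.le_of_opNorm_le hξ ψ
  linarith

theorem exists_norm_le_one_forall_mem_lt_apply {ξ : StrongDual ℝ (StrongDual ℝ E)} (hξ : ‖ξ‖ ≤ 1)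
    {s : Finset (StrongDual ℝ E)} {θ : ℝ} (h : ∀ g ∈ s, θ < ξ g) :
    ∃ x, ‖x‖ ≤ 1 ∧ ∀ g ∈ s, θ < g x := by
  have hopen : IsOpen (Set.univ.pi fun _ : s ↦ Set.Ioi θ) :=
    isOpen_set_pi Set.finite_univ fun _ _ ↦ isOpen_Ioi
  obtain ⟨_, hx, x, hx_norm, rfl⟩ := mem_closure_iff.1
    (mem_closure_pi_image_closedBall ((↑) : s → StrongDual ℝ E) hξ) _ hopen fun g _ ↦ h g g.2
  exact ⟨x, mem_closedBall_zero_iff.1 hx_norm, fun g hg ↦ hx ⟨g, hg⟩ (Set.mem_univ _)⟩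

theorem exists_norm_le_one_forall_mem_eq_zero_lt_apply {ξ : StrongDual ℝ (StrongDual ℝ E)} {θ : ℝ}
    (h : ∀ y, θ < ‖ξ - inclusionInDoubleDual ℝ E y‖) (s : Finset E) :
    ∃ g : StrongDual ℝ E, ‖g‖ ≤ 1 ∧ (∀ y ∈ s, g y = 0) ∧ θ < ξ g := by
  have hspan : Submodule.span ℝ (Set.range fun y : s ↦ inclusionInDoubleDual ℝ E y) ≤
      LinearMap.range (inclusionInDoubleDual ℝ E).toLinearMap := by
    rw [Submodule.span_le, Set.range_subset_iff]
    exact fun y ↦ ⟨y, rfl⟩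
  obtain ⟨g, hg, hg_zero, hξg⟩ := exists_norm_le_one_forall_apply_eq_zero_lt_apply
    (fun y : s ↦ inclusionInDoubleDual ℝ E y) (ξ := ξ) (θ := θ) fun η hη ↦ by
      obtain ⟨y, rfl⟩ := hspan hη
      exact h y
  exact ⟨g, hg, fun y hy ↦ hg_zero ⟨y, hy⟩, hξg⟩

theorem exists_norm_eq_one_forall_lt_norm_sub_linearIsometry {Y : Type*} [NormedAddCommGroup Y]
    [NormedSpace ℝ Y] [CompleteSpace Y] (J : Y →ₗᵢ[ℝ] E) (hJ : ¬ Function.Surjective J) {θ : ℝ}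
    (hθ : θ < 1) : ∃ ξ, ‖ξ‖ = 1 ∧ ∀ y, θ < ‖ξ - J y‖ := by
  have hclosed : IsClosed (J.toLinearMap.range : Set E) :=
    J.isometry.isClosedEmbedding.isClosed_range
  have hproper : ∃ ξ, ξ ∉ J.toLinearMap.range := not_forall.1 hJ
  obtain ⟨r, hθr, hr⟩ := exists_between hθ
  obtain ⟨ξ, -, hξ, hdist⟩ := riesz_lemma_of_lt_one hclosed hproper hr
  exact ⟨ξ, hξ, fun y ↦ hθr.trans_le (hdist _ ⟨y, rfl⟩)⟩

theorem exists_triangular_of_not_surjective_inclusionInDoubleDual [CompleteSpace E]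
    (hE : ¬ Function.Surjective (inclusionInDoubleDual ℝ E)) {θ : ℝ} (hθ : θ < 1) :
    ∃ (e : ℕ → E) (g : ℕ → StrongDual ℝ E), (∀ n, ‖e n‖ ≤ 1) ∧ (∀ n, ‖g n‖ ≤ 1) ∧
      (∀ m n, m < n → g n (e m) = 0) ∧ ∀ m n, m ≤ n → θ ≤ g m (e n) := by
  classical
  obtain ⟨ξ, hξ, hdist⟩ := exists_norm_eq_one_forall_lt_norm_sub_linearIsometry
    (E := StrongDual ℝ (StrongDual ℝ E)) (inclusionInDoubleDualLi ℝ) hE hθ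
  -- Each new `g` separates `ξ` from the earlier `e`s; each new `e` imitates `ξ` on the `g`s so far.
  obtain ⟨F, hF, hF_lt⟩ := exists_seq_of_forall_finset_exists
    (fun q : E × StrongDual ℝ E ↦ ‖q.1‖ ≤ 1 ∧ ‖q.2‖ ≤ 1 ∧ θ < ξ q.2 ∧ θ < q.2 q.1)
    (fun q q' ↦ q'.2 q.1 = 0 ∧ θ < q.2 q'.1) fun s hs ↦ by
      obtain ⟨g, hg, hg_zero, hξg⟩ :=
        exists_norm_le_one_forall_mem_eq_zero_lt_apply hdist (s.image Prod.fst)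
      have hξ_lt : ∀ g' ∈ insert g (s.image Prod.snd), θ < ξ g' := by
        rw [forall_mem_insert, forall_mem_image]
        exact ⟨hξg, fun q hq ↦ (hs q hq).2.2.1⟩
      obtain ⟨e, he, hge⟩ := exists_norm_le_one_forall_mem_lt_apply hξ.le hξ_lt
      rw [forall_mem_insert, forall_mem_image] at hge
      exact ⟨(e, g), ⟨he, hg, hξg, hge.1⟩,
        fun q hq ↦ ⟨hg_zero _ (mem_image_of_mem _ hq), hge.2 hq⟩⟩
  refine ⟨fun n ↦ (F n).1, fun n ↦ (F n).2, fun n ↦ (hF n).1, fun n ↦ (hF n).2.1,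
    fun m n hmn ↦ (hF_lt m n hmn).1, fun m n hmn ↦ ?_⟩
  rcases hmn.lt_or_eq with hlt | rfl
  · exact (hF_lt m n hlt).2.le
  · exact (hF m).2.2.2.le

end JamesSequences

section BlockSeparated

variable {E : Type*} [SeminormedAddCommGroup E] {u : ℕ → E} {θ : ℝ}

/-- A sequence as in James's characterization of reflexivity: sums over blocks of indices `S < T`
differ in norm by at least `θ * #T`. The block `S` may be empty. -/
def IsBlockSeparated (θ : ℝ) (u : ℕ → E) : Prop :=
  ∀ S T : Finset ℕ, (∀ i ∈ S, ∀ j ∈ T, i < j) → θ * #T ≤ ‖∑ i ∈ T, u i - ∑ i ∈ S, u i‖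

theorem IsBlockSeparated.smul [NormedSpace ℝ E] (hu : IsBlockSeparated θ u) {c : ℝ} (hc : 0 ≤ c) :
    IsBlockSeparated (c * θ) fun n ↦ c • u n := by
  intro S T hST
  rw [← smul_sum, ← smul_sum, ← smul_sub, norm_smul, Real.norm_of_nonneg hc, mul_assoc]
  exact mul_le_mul_of_nonneg_left (hu S T hST) hc

theorem isBlockSeparated_of_triangular [NormedSpace ℝ E] {g : ℕ → StrongDual ℝ E}
    (hg : ∀ n, ‖g n‖ ≤ 1) (hzero : ∀ m n, m < n → g n (u m) = 0)
    (hle : ∀ m n, m ≤ n → θ ≤ g m (u n)) : IsBlockSeparated θ u := by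
  intro S T hST
  rcases T.eq_empty_or_nonempty with rfl | hT
  · simp
  set φ := g (T.min' hT)
  have hS : φ (∑ i ∈ S, u i) = 0 := by
    rw [map_sum]
    exact sum_eq_zero fun i hi ↦ hzero _ _ (hST i hi _ (T.min'_mem hT))
  calc θ * #T = #T • θ := by rw [nsmul_eq_mul, mul_comm]
    _ ≤ ∑ i ∈ T, φ (u i) := card_nsmul_le_sum _ _ _ fun i hi ↦ hle _ _ (T.min'_le i hi)
    _ = φ (∑ i ∈ T, u i - ∑ i ∈ S, u i) := by rw [map_sub, hS, sub_zero, map_sum]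
    _ ≤ ‖∑ i ∈ T, u i - ∑ i ∈ S, u i‖ :=
      (Real.le_norm_self _).trans <| by simpa only [one_mul] using φ.le_of_opNorm_le (hg _) _

theorem exists_isBlockSeparated_of_not_surjective_inclusionInDoubleDual {Y : Type*}
    [NormedAddCommGroup Y] [NormedSpace ℝ Y] [CompleteSpace Y]
    (hY : ¬ Function.Surjective (inclusionInDoubleDual ℝ Y)) (hθ : θ < 1) :
    ∃ e : ℕ → Y, (∀ n, ‖e n‖ ≤ 1) ∧ IsBlockSeparated θ e := by
  obtain ⟨e, g, he, hg, hzero, hle⟩ :=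
    exists_triangular_of_not_surjective_inclusionInDoubleDual hY hθ
  exact ⟨e, he, isBlockSeparated_of_triangular hg hzero hle⟩

end BlockSeparated

section PropertyBeta

/-- Property (β) of Rolewicz, in Kutzarova's sequential form; the condition `sep((xs)) ≥ t` is
written out as a bound on all pairwise distances. -/
def PropertyBeta (X : Type*) [SeminormedAddCommGroup X] : Prop :=
  ∀ t : ℝ, 0 < t → t ≤ 2 → ∃ δ : ℝ, 0 < δ ∧
    ∀ (x : X) (xs : ℕ → X), ‖x‖ ≤ 1 → (∀ n, ‖xs n‖ ≤ 1) →
      (∀ n m, n ≠ m → t ≤ ‖xs n - xs m‖) →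
      ∃ n, ‖x - xs n‖ / 2 ≤ 1 - δ

/-- A scale-invariant form of property (β): if `x` and a `τ * A`-separated sequence lie in a ball of
radius `A`, then some term of the sequence is at distance from `x` smaller by a factor `ρ` than the
bound `2 * A` of the triangle inequality. -/
def IsBetaModulus (X : Type*) [PseudoMetricSpace X] (τ ρ : ℝ) : Prop :=
  ∀ ⦃A : ℝ⦄ ⦃x z : X⦄ ⦃xs : ℕ → X⦄, dist x z ≤ A → (∀ n, dist (xs n) z ≤ A) →
    (∀ m n, m < n → τ * A ≤ dist (xs m) (xs n)) → ∃ n, dist x (xs n) ≤ ρ * (2 * A)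

theorem PropertyBeta.exists_isBetaModulus {X : Type*} [SeminormedAddCommGroup X] [NormedSpace ℝ X]
    (hX : PropertyBeta X) {τ : ℝ} (hτ : 0 < τ) : ∃ ρ, 0 ≤ ρ ∧ ρ < 1 ∧ IsBetaModulus X τ ρ := by
  obtain ⟨δ, hδ, hball⟩ := hX (min τ 2) (lt_min hτ two_pos) (min_le_right _ _)
  refine ⟨max 0 (1 - δ), le_max_left _ _, max_lt one_pos (by linarith), ?_⟩
  intro A x z xs hx hxs hsep
  obtain rfl | hA := (dist_nonneg.trans hx).eq_or_lt
  · exact ⟨0, by simpa using (dist_triangle_right x (xs 0) z).trans (add_le_add hx (hxs 0))⟩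
  have dist_eq (v w : X) : ‖A⁻¹ • (v - z) - A⁻¹ • (w - z)‖ = dist v w / A := by
    rw [← smul_sub, sub_sub_sub_cancel_right, norm_smul, norm_inv, Real.norm_of_nonneg hA.le,
      dist_eq_norm, div_eq_inv_mul]
  have norm_le_one {v : X} (hv : dist v z ≤ A) : ‖A⁻¹ • (v - z)‖ ≤ 1 := by
    simpa using (dist_eq v z).trans_le ((div_le_one hA).2 hv)
  have le_dist {m n : ℕ} (hmn : m ≠ n) : τ * A ≤ dist (xs m) (xs n) := by
    rcases hmn.lt_or_gt with hlt | hgt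
    · exact hsep m n hlt
    · exact dist_comm (xs n) (xs m) ▸ hsep n m hgt
  obtain ⟨n, hn⟩ := hball (A⁻¹ • (x - z)) (fun n ↦ A⁻¹ • (xs n - z)) (norm_le_one hx)
    (fun n ↦ norm_le_one (hxs n)) fun m n hmn ↦ by
      rw [dist_eq, le_div_iff₀ hA]
      exact (mul_le_mul_of_nonneg_right (min_le_left _ _) hA.le).trans (le_dist hmn)
  refine ⟨n, ?_⟩
  rw [dist_eq, div_right_comm, div_le_iff₀ hA] at hn
  calc dist x (xs n) = dist x (xs n) / 2 * 2 := by ring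
    _ ≤ (1 - δ) * A * 2 := by gcongr
    _ ≤ max 0 (1 - δ) * A * 2 := by gcongr; exact le_max_right _ _
    _ = max 0 (1 - δ) * (2 * A) := by ring

end PropertyBeta

section LargeScale

variable {X Y : Type*} [SeminormedAddCommGroup X] [NormedSpace ℝ X] [PseudoMetricSpace Y]
  {f : X → Y} {r L : ℝ}

theorem dist_le_mul_add_one_of_forall_dist_le (hr : 0 < r)
    (hf : ∀ x y, dist x y ≤ r → dist (f x) (f y) ≤ L) (x y : X) :
    dist (f x) (f y) ≤ L * (dist x y / r + 1) := by
  have hL : 0 ≤ L := dist_nonneg.trans (hf x x (by simpa using hr.le))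
  set n := ⌊dist x y / r⌋₊ + 1
  have hn : (0 : ℝ) < n := by positivity
  let p : ℕ → X := fun i ↦ AffineMap.lineMap x y ((i : ℝ) / n)
  have hp (i : ℕ) : dist (p i) (p (i + 1)) ≤ r := by
    have hdist : dist ((i : ℝ) / n) ((i + 1 : ℕ) / n) = 1 / n := by
      rw [Real.dist_eq, abs_sub_comm, ← sub_div, Nat.cast_succ, add_sub_cancel_left,
        abs_of_pos (by positivity)]
    rw [dist_lineMap_lineMap, hdist, one_div_mul_eq_div, div_le_comm₀ hn hr]
    exact_mod_cast (Nat.lt_floor_add_one (dist x y / r)).le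
  calc dist (f x) (f y) = dist (f (p 0)) (f (p n)) := by simp [p, hn.ne']
    _ ≤ ∑ _i ∈ range n, L := dist_le_range_sum_of_dist_le (f := f ∘ p) n fun _ ↦ hf _ _ (hp _)
    _ = L * n := by rw [sum_const, card_range, nsmul_eq_mul, mul_comm]
    _ ≤ L * (dist x y / r + 1) := by
      gcongr
      simpa [n] using Nat.floor_le (by positivity : 0 ≤ dist x y / r)

theorem exists_forall_mul_le_dist_of_forall_dist_le (hr : 0 < r)
    (hf : ∀ x y, dist x y ≤ r → dist (f x) (f y) ≤ L) {θ : ℝ} (hθ : 0 < θ) :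
    ∃ τ > 0, ∃ K : ℕ, 0 < K ∧
      ∀ k ≥ K, ∀ x y, θ * k ≤ dist (f x) (f y) → τ * (r * k) ≤ dist x y := by
  set M := max L 1
  have hM : 0 < M := one_pos.trans_le (le_max_right _ _)
  have hfM (x y : X) (hxy : dist x y ≤ r) : dist (f x) (f y) ≤ M :=
    (hf x y hxy).trans (le_max_left _ _)
  obtain ⟨K, hK⟩ := exists_nat_gt (2 * M / θ)
  refine ⟨θ / (2 * M), div_pos hθ (mul_pos two_pos hM), K, ?_, fun k hk x y hxy ↦ ?_⟩
  · exact_mod_cast (show 0 ≤ 2 * M / θ by positivity).trans_lt hK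
  have hk : 2 * M ≤ θ * k := by
    rw [← div_le_iff₀' hθ]
    exact hK.le.trans (by exact_mod_cast hk)
  have hθk : θ * k ≤ 2 * M * (dist x y / r) := by
    linarith [hxy.trans (dist_le_mul_add_one_of_forall_dist_le hr hfM x y)]
  calc θ / (2 * M) * (r * k) = θ * k / (2 * M) * r := by ring
    _ ≤ dist x y / r * r :=
      mul_le_mul_of_nonneg_right ((div_le_iff₀' (by positivity)).2 hθk) hr.le
    _ = dist x y := div_mul_cancel₀ _ hr.ne'

end LargeScale

section BlockLift

variable {X Y : Type*} {f : X → Y} {u : ℕ → Y} {F S T : Finset ℕ} {k l : ℕ} {x y z : X} {a : ℝ}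

section AddCommMonoid

variable [AddCommMonoid Y]

/-- `x` is a lift along `f` of the point reached from `f z` by adding the terms of `u` with index in
`S`, a block of `k` indices. The block lies beyond `F`, the set of indices already used, so that
lifts can be concatenated. -/
structure IsBlockLift (f : X → Y) (u : ℕ → Y) (F : Finset ℕ) (k : ℕ) (z : X) (S : Finset ℕ)
    (x : X) : Prop where
  lt : ∀ i ∈ F, ∀ j ∈ S, i < j
  card_eq : #S = k
  map_eq : f x = f z + ∑ i ∈ S, u i

theorem IsBlockLift.trans (hS : IsBlockLift f u F k z S y)
    (hT : IsBlockLift f u (F ∪ S) l y T x) : IsBlockLift f u F (k + l) z (S ∪ T) x := by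
  have hdisj : Disjoint S T :=
    disjoint_left.2 fun i hiS hiT ↦ lt_irrefl i (hT.lt i (mem_union_right F hiS) i hiT)
  refine ⟨fun i hi j hj ↦ ?_, ?_, ?_⟩
  · exact (mem_union.1 hj).elim (hS.lt i hi j) (hT.lt i (mem_union_left S hi) j)
  · rw [card_union_of_disjoint hdisj, hS.card_eq, hT.card_eq]
  · rw [hT.map_eq, hS.map_eq, sum_union hdisj, add_assoc]

variable [PseudoMetricSpace X]

/-- From every point, and beyond every finite set of indices, some block of `k` terms of `u` can be
lifted along `f` at cost `a` per term. -/
def LiftsBlocks (f : X → Y) (u : ℕ → Y) (k : ℕ) (a : ℝ) : Prop :=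
  ∀ (z : X) (F : Finset ℕ), ∃ S x, IsBlockLift f u F k z S x ∧ dist x z ≤ a * k

theorem liftsBlocks_zero : LiftsBlocks f u 0 a :=
  fun z _ ↦ ⟨∅, z, ⟨by simp, card_empty, by simp⟩, by simp⟩

theorem LiftsBlocks.add (hk : LiftsBlocks f u k a) (hl : LiftsBlocks f u l a) :
    LiftsBlocks f u (k + l) a := by
  intro z F
  obtain ⟨S, y, hS, hyz⟩ := hk z F
  obtain ⟨T, x, hT, hxy⟩ := hl y (F ∪ S)
  refine ⟨S ∪ T, x, hS.trans hT, ?_⟩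
  calc dist x z ≤ dist x y + dist y z := dist_triangle _ _ _
    _ ≤ a * l + a * k := add_le_add hxy hyz
    _ = a * (k + l : ℕ) := by push_cast; ring

theorem LiftsBlocks.of_one (h : LiftsBlocks f u 1 a) (k : ℕ) : LiftsBlocks f u k a := by
  induction k with
  | zero => exact liftsBlocks_zero
  | succ k ih => exact ih.add h

theorem LiftsBlocks.exists_seq (h : LiftsBlocks f u k a) (z : X) (F : Finset ℕ) :
    ∃ (S : ℕ → Finset ℕ) (x : ℕ → X), (∀ n, IsBlockLift f u F k z (S n) (x n)) ∧
      (∀ n, dist (x n) z ≤ a * k) ∧ ∀ m n, m < n → ∀ i ∈ S m, ∀ j ∈ S n, i < j := by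
  classical
  obtain ⟨q, hq, hlt⟩ := exists_seq_of_forall_finset_exists
    (fun q : Finset ℕ × X ↦ IsBlockLift f u F k z q.1 q.2 ∧ dist q.2 z ≤ a * k)
    (fun q q' ↦ ∀ i ∈ q.1, ∀ j ∈ q'.1, i < j) fun s _ ↦ by
      obtain ⟨T, x, hT, hxz⟩ := h z (F ∪ s.biUnion Prod.fst)
      refine ⟨(T, x), ⟨⟨fun i hi ↦ hT.lt i (mem_union_left _ hi), hT.card_eq, hT.map_eq⟩, hxz⟩, ?_⟩
      exact fun q hq i hi ↦ hT.lt i (mem_union_right F (mem_biUnion.2 ⟨q, hq, hi⟩))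
  exact ⟨fun n ↦ (q n).1, fun n ↦ (q n).2, fun n ↦ (hq n).1, fun n ↦ (hq n).2, hlt⟩

end AddCommMonoid

section Normed

variable [SeminormedAddCommGroup Y] {θ τ ρ r R : ℝ}

theorem IsBlockSeparated.mul_le_dist (hu : IsBlockSeparated θ u) (hS : IsBlockLift f u F k z S x)
    (hT : IsBlockLift f u F k z T y) (hST : ∀ i ∈ S, ∀ j ∈ T, i < j) :
    θ * k ≤ dist (f x) (f y) := by
  rw [dist_comm, dist_eq_norm, hS.map_eq, hT.map_eq, add_sub_add_left_eq_sub, ← hT.card_eq]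
  exact hu S T hST

variable [PseudoMetricSpace X]

theorem liftsBlocks_one (hf : ∀ x, closedBall (f x) R ⊆ f '' closedBall x r)
    (hu : ∀ n, ‖u n‖ ≤ R) : LiftsBlocks f u 1 r := by
  intro z F
  obtain ⟨n, hn⟩ := F.exists_nat_subset_range
  obtain ⟨x, hx, hfx⟩ := hf z (show f z + u n ∈ closedBall (f z) R by simpa using hu n)
  exact ⟨{n}, x, ⟨by simpa using fun i hi ↦ mem_range.1 (hn hi), card_singleton n, by simpa⟩,
    by simpa using hx⟩

theorem LiftsBlocks.mul_le (h : LiftsBlocks f u k a) [Nonempty X] (hk : 0 < k)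
    (hu : IsBlockSeparated θ u)
    (hf : ∀ x y, θ * k ≤ dist (f x) (f y) → τ * (r * k) ≤ dist x y) : τ * r ≤ a := by
  obtain ⟨z⟩ := ‹Nonempty X›
  obtain ⟨S, x, hS, hxz⟩ := h z ∅
  have hθ : θ * k ≤ dist (f x) (f z) := by
    simpa [hS.map_eq, hS.card_eq] using hu ∅ S (by simp)
  have hle : τ * r * k ≤ a * k := (mul_assoc τ r k).trans_le ((hf x z hθ).trans hxz)
  exact le_of_mul_le_mul_right hle (by exact_mod_cast hk)

theorem LiftsBlocks.two_mul (h : LiftsBlocks f u k a) (hρ : IsBetaModulus X τ ρ)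
    (hu : IsBlockSeparated θ u)
    (hf : ∀ x y, θ * k ≤ dist (f x) (f y) → τ * (a * k) ≤ dist x y) :
    LiftsBlocks f u (2 * k) (ρ * a) := by
  intro z F
  obtain ⟨S, y, hS, hyz⟩ := h z F
  obtain ⟨T, x, hT, hxy, hlt⟩ := h.exists_seq y (F ∪ S)
  obtain ⟨n, hn⟩ := hρ (dist_comm z y ▸ hyz) hxy fun m n hmn ↦
    hf _ _ (hu.mul_le_dist (hT m) (hT n) (hlt m n hmn))
  refine ⟨S ∪ T n, x n, k.two_mul ▸ hS.trans (hT n), ?_⟩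
  calc dist (x n) z = dist z (x n) := dist_comm _ _
    _ ≤ ρ * (2 * (a * k)) := hn
    _ = ρ * a * (2 * k : ℕ) := by push_cast; ring

theorem LiftsBlocks.two_pow_mul {K : ℕ} (h : LiftsBlocks f u K r) (hr : 0 ≤ r) (hτ : 0 ≤ τ)
    (hρ : IsBetaModulus X τ ρ) (hρ₀ : 0 ≤ ρ) (hρ₁ : ρ ≤ 1) (hu : IsBlockSeparated θ u)
    (hf : ∀ k ≥ K, ∀ x y, θ * k ≤ dist (f x) (f y) → τ * (r * k) ≤ dist x y) (j : ℕ) :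
    LiftsBlocks f u (2 ^ j * K) (ρ ^ j * r) := by
  induction j with
  | zero => simpa using h
  | succ j ih =>
    rw [pow_succ', pow_succ', mul_assoc, mul_assoc]
    refine ih.two_mul hρ hu fun x y hxy ↦ le_trans ?_
      (hf _ (Nat.le_mul_of_pos_left K (by positivity)) x y hxy)
    gcongr
    exact mul_le_of_le_one_left hr (pow_le_one₀ hρ₀ hρ₁)

end Normed

end BlockLift

section Quotient

variable {X Y : Type*} [SeminormedAddCommGroup X] [NormedSpace ℝ X] [NormedAddCommGroup Y]
  [NormedSpace ℝ Y] [CompleteSpace Y]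

theorem uniformQuotient_of_propertyBeta_reflexive_general (hX : PropertyBeta X) {f : X → Y}
    {r R L : ℝ} (hr : 0 < r) (hR : 0 < R) (hlift : ∀ x, closedBall (f x) R ⊆ f '' closedBall x r)
    (hbdd : ∀ x, f '' closedBall x r ⊆ closedBall (f x) L) :
    Function.Surjective (inclusionInDoubleDual ℝ Y) := by
  by_contra hY
  obtain ⟨e, he, hsep⟩ :=
    exists_isBlockSeparated_of_not_surjective_inclusionInDoubleDual hY one_half_lt_one
  have hu : IsBlockSeparated (R * (1 / 2)) fun n ↦ R • e n := hsep.smul hR.le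
  have hone : LiftsBlocks f (fun n ↦ R • e n) 1 r := liftsBlocks_one hlift fun n ↦ by
    simpa [norm_smul, abs_of_pos hR] using mul_le_of_le_one_right hR.le (he n)
  obtain ⟨τ, hτ, K, hK, hf⟩ := exists_forall_mul_le_dist_of_forall_dist_le hr
    (fun x y hxy ↦ hbdd y ⟨x, hxy, rfl⟩) (show 0 < R * (1 / 2) by positivity)
  obtain ⟨ρ, hρ₀, hρ₁, hρ⟩ := hX.exists_isBetaModulus hτ
  obtain ⟨j, hj⟩ := exists_pow_lt_of_lt_one hτ hρ₁
  have hcost : LiftsBlocks f (fun n ↦ R • e n) (2 ^ j * K) (ρ ^ j * r) :=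
    (hone.of_one K).two_pow_mul hr.le hτ.le hρ hρ₀ hρ₁.le hu hf j
  have hle : τ * r ≤ ρ ^ j * r := hcost.mul_le (by positivity) hu
    (hf _ (Nat.le_mul_of_pos_left K (by positivity)))
  exact hj.not_ge (le_of_mul_le_mul_right hle hr)

end Quotient

/-- If Y is a uniform quotient of a Banach space X with property (β), then Y is
reflexive. -/
theorem uniformQuotient_of_propertyBeta_reflexive
    (X Y : Type*) [NormedAddCommGroup X] [NormedSpace ℝ X] [CompleteSpace X]
    [NormedAddCommGroup Y] [NormedSpace ℝ Y] [CompleteSpace Y]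
    (hβ : ∀ t : ℝ, 0 < t → t ≤ 2 → ∃ δ : ℝ, 0 < δ ∧
      ∀ (x : X) (xs : ℕ → X), ‖x‖ ≤ 1 → (∀ n, ‖xs n‖ ≤ 1) →
        (∀ n m, n ≠ m → t ≤ ‖xs n - xs m‖) →
        ∃ n, ‖x - xs n‖ / 2 ≤ 1 - δ)
    (f : X → Y) (hsurj : Function.Surjective f)
    (ω Ω : ℝ → ℝ) (hωmono : Monotone ω) (hΩmono : Monotone Ω)
    (hωpos : ∀ r : ℝ, 0 < r → 0 < ω r)
    (hΩ0 : Filter.Tendsto Ω (nhdsWithin 0 (Set.Ioi 0)) (nhds 0))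
    (hquot : ∀ (x : X) (r : ℝ), 0 < r →
      Metric.closedBall (f x) (ω r) ⊆ f '' Metric.closedBall x r ∧
      f '' Metric.closedBall x r ⊆ Metric.closedBall (f x) (Ω r)) :
    Function.Surjective ⇑(NormedSpace.inclusionInDoubleDual ℝ Y) :=
  uniformQuotient_of_propertyBeta_reflexive_general hβ one_pos (hωpos 1 one_pos)
    (fun x ↦ (hquot x 1 one_pos).1) fun x ↦ (hquot x 1 one_pos).2
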